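/- Let p ≥ 1, let A ∈ {0,1}^{n×d}, and let C ⊆ C' ⊆ {1,…,d} with |C' \ C| ≤ m. Then F_p(A,C) / 2^{m(p−1)} ≤ F_p(A,C') ≤ F_p(A,C). -/

import Mathlib

open scoped Classical

/-- The projected frequency moment `F_p(A,U) = Σ_z f_z(A,U)^p`, where `f_z(A,U)` is the
number of rows of `A` whose restriction to the columns in `U` equals the pattern `z`. -/
noncomputable def FpA {n d : ℕ} (A : Fin n → Fin d → Fin 2) (U : Finset (Fin d))
    (p : ℝ) : ℝ :=
  ∑ z : ↥U → Fin 2,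
    ((Finset.univ.filter (fun i : Fin n => ∀ j : ↥U, A i j = z j)).card : ℝ) ^ p

/-!
Restricting patterns on `C'` to `C` groups the frequencies on `C'` into fibres of size
`2 ^ |C' \ C|`, and each frequency on `C` is the sum over its fibre. For `p ≥ 1` the map
`t ↦ t ^ p` is superadditive on `[0, ∞)`, so merging fibres can only increase the `p`-th moment; by
Jensen's inequality the increase is at most a factor `K ^ (p - 1)`, where `K` is the fibre size.
-/

open Finset

section FiberSums

theorem sum_rpow_le_rpow_sum {β : Type*} (s : Finset β) {x : β → ℝ} {p : ℝ}
    (hx : ∀ b ∈ s, 0 ≤ x b) (hp : 1 ≤ p) :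
    ∑ b ∈ s, x b ^ p ≤ (∑ b ∈ s, x b) ^ p := by
  induction s using Finset.induction_on with
  | empty => simp [Real.zero_rpow (by linarith : p ≠ 0)]
  | insert a s ha ih =>
    have hxs : ∀ b ∈ s, 0 ≤ x b := fun b hb => hx b (mem_insert_of_mem hb)
    rw [sum_insert ha, sum_insert ha]
    calc x a ^ p + ∑ b ∈ s, x b ^ p
        ≤ x a ^ p + (∑ b ∈ s, x b) ^ p := by gcongr; exact ih hxs
      _ ≤ (x a + ∑ b ∈ s, x b) ^ p :=
        Real.add_rpow_le_rpow_add (hx a (mem_insert_self a s)) (sum_nonneg hxs) hp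

variable {α β : Type*} [Fintype α] [Fintype β] [DecidableEq α] {x : β → ℝ} {p : ℝ}

theorem sum_rpow_le_sum_rpow_sum_fiber (r : β → α) (hx : ∀ b, 0 ≤ x b) (hp : 1 ≤ p) :
    ∑ b, x b ^ p ≤ ∑ a, (∑ b with r b = a, x b) ^ p := by
  rw [← sum_fiberwise univ r]
  gcongr with a
  exact sum_rpow_le_rpow_sum _ (fun b _ => hx b) hp

theorem sum_rpow_sum_fiber_le {r : β → α} {K : ℕ} (hx : ∀ b, 0 ≤ x b) (hp : 1 ≤ p)
    (hr : ∀ a, #{b | r b = a} ≤ K) :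
    ∑ a, (∑ b with r b = a, x b) ^ p ≤ (K : ℝ) ^ (p - 1) * ∑ b, x b ^ p := by
  rw [← sum_fiberwise univ r, mul_sum]
  gcongr with a
  calc (∑ b with r b = a, x b) ^ p
      ≤ (#{b | r b = a} : ℝ) ^ (p - 1) * ∑ b with r b = a, x b ^ p :=
        Real.rpow_sum_le_const_mul_sum_rpow_of_nonneg _ hp fun b _ => hx b
    _ ≤ (K : ℝ) ^ (p - 1) * ∑ b with r b = a, x b ^ p := by
        have : 0 ≤ ∑ b with r b = a, x b ^ p :=
          sum_nonneg fun b _ => Real.rpow_nonneg (hx b) p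
        have : 0 ≤ p - 1 := sub_nonneg.mpr hp
        gcongr
        exact hr a

end FiberSums

section Patterns

variable {ι κ σ : Type*} [Fintype ι] [DecidableEq κ] [DecidableEq σ]

/-- The frequency `f_z(A,U)` of the pattern `z` in the rows of an array `A` over an arbitrary
alphabet `σ`, where `A i` is the `i`-th row. -/
def patternFreq (A : ι → κ → σ) (U : Finset κ) (z : U → σ) : ℕ :=
  #{i | U.restrict (A i) = z}

variable [Fintype σ]

/-- The projected frequency moment `F_p(A,U)` of an array over an arbitrary finite alphabet,
generalizing `FpA`. -/
noncomputable def projMoment (A : ι → κ → σ) (U : Finset κ) (p : ℝ) : ℝ :=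
  ∑ z : U → σ, (patternFreq A U z : ℝ) ^ p

theorem projMoment_eq_FpA {n d : ℕ} (A : Fin n → Fin d → Fin 2) (U : Finset (Fin d)) (p : ℝ) :
    projMoment A U p = FpA A U p := by
  simp only [projMoment, patternFreq, FpA, funext_iff, restrict]

/-- The patterns on `C'` that extend the pattern `z` on `C`: the fibre over `z` of restriction
from `C'` to `C`. -/
abbrev patternExtensions {C C' : Finset κ} (hsub : C ⊆ C') (z : C → σ) : Finset (C' → σ) :=
  {w | restrict₂ (π := fun _ => σ) hsub w = z}

variable {C C' : Finset κ} {p : ℝ}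

theorem card_patternExtensions (hsub : C ⊆ C') (z : C → σ) :
    #(patternExtensions hsub z) = Fintype.card σ ^ #(C' \ C) := by
  let choices (j : C') : Finset σ := if hj : j.1 ∈ C then {z ⟨j, hj⟩} else univ
  have extensions_eq : patternExtensions hsub z = Fintype.piFinset choices := by
    ext w
    simp only [mem_filter_univ, Fintype.mem_piFinset, funext_iff, restrict₂]
    grind
  have card_choices (j : C') : #(choices j) = if j.1 ∈ C then 1 else Fintype.card σ := by
    grind [card_univ]
  calc #(patternExtensions hsub z)
      = ∏ j : C', if j.1 ∈ C then 1 else Fintype.card σ := by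
        rw [extensions_eq, Fintype.card_piFinset, prod_congr rfl fun j _ => card_choices j]
    _ = ∏ j ∈ C', if j ∈ C then 1 else Fintype.card σ :=
        prod_coe_sort C' fun j => if j ∈ C then 1 else Fintype.card σ
    _ = Fintype.card σ ^ #(C' \ C) := by
        rw [prod_ite, prod_const_one, one_mul, prod_const, sdiff_eq_filter]

variable (A : ι → κ → σ)

theorem patternFreq_eq_sum_patternExtensions (hsub : C ⊆ C') (z : C → σ) :
    patternFreq A C z = ∑ w ∈ patternExtensions hsub z, patternFreq A C' w := by
  calc patternFreq A C z
      = #{i | C'.restrict (A i) ∈ patternExtensions hsub z} := by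
        simp only [mem_filter_univ]
        rfl
    _ = ∑ w ∈ patternExtensions hsub z, patternFreq A C' w :=
        (sum_card_fiberwise_eq_card_filter _ _ _).symm

theorem projMoment_eq_sum_patternExtensions (hsub : C ⊆ C') (p : ℝ) :
    projMoment A C p =
      ∑ z : C → σ, (∑ w ∈ patternExtensions hsub z, (patternFreq A C' w : ℝ)) ^ p := by
  simp only [projMoment, patternFreq_eq_sum_patternExtensions A hsub, Nat.cast_sum]

theorem projMoment_anti (hsub : C ⊆ C') (hp : 1 ≤ p) :
    projMoment A C' p ≤ projMoment A C p := by
  rw [projMoment_eq_sum_patternExtensions A hsub]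
  exact sum_rpow_le_sum_rpow_sum_fiber _ (fun _ => Nat.cast_nonneg _) hp

theorem projMoment_le_card_rpow_mul (hsub : C ⊆ C') (hp : 1 ≤ p) :
    projMoment A C p ≤
      (Fintype.card σ : ℝ) ^ ((#(C' \ C) : ℝ) * (p - 1)) * projMoment A C' p := by
  rw [projMoment_eq_sum_patternExtensions A hsub, Real.rpow_mul (Nat.cast_nonneg _),
    Real.rpow_natCast, ← Nat.cast_pow]
  exact sum_rpow_sum_fiber_le (fun _ => Nat.cast_nonneg _) hp
    fun z => (card_patternExtensions hsub z).le

theorem projMoment_nonneg (U : Finset κ) (p : ℝ) : 0 ≤ projMoment A U p :=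
  sum_nonneg fun _ _ => Real.rpow_nonneg (Nat.cast_nonneg _) p

theorem stmt_18_general [Nonempty σ] {m : ℕ} (hp : 1 ≤ p) (hsub : C ⊆ C')
    (hm : #(C' \ C) ≤ m) :
    projMoment A C p / (Fintype.card σ : ℝ) ^ ((m : ℝ) * (p - 1)) ≤ projMoment A C' p ∧
      projMoment A C' p ≤ projMoment A C p := by
  have one_le_card : (1 : ℝ) ≤ Fintype.card σ := by exact_mod_cast Fintype.card_pos
  refine ⟨?_, projMoment_anti A hsub hp⟩
  rw [div_le_iff₀' (by positivity)]
  calc projMoment A C p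
      ≤ (Fintype.card σ : ℝ) ^ ((#(C' \ C) : ℝ) * (p - 1)) * projMoment A C' p :=
        projMoment_le_card_rpow_mul A hsub hp
    _ ≤ (Fintype.card σ : ℝ) ^ ((m : ℝ) * (p - 1)) * projMoment A C' p := by
        have := projMoment_nonneg A C' p
        have : 0 ≤ p - 1 := sub_nonneg.mpr hp
        gcongr

end Patterns

/-- Let `p ≥ 1`, let `A ∈ {0,1}^{n×d}`, and let `C ⊆ C' ⊆ {1,…,d}`
with `|C' \ C| ≤ m`.  Then `F_p(A,C) / 2^{m(p−1)} ≤ F_p(A,C') ≤ F_p(A,C)`. -/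
theorem stmt_18 (n d m : ℕ) (p : ℝ) (hp : 1 ≤ p) (A : Fin n → Fin d → Fin 2)
    (C C' : Finset (Fin d)) (hsub : C ⊆ C') (hm : (C' \ C).card ≤ m) :
    FpA A C p / (2 : ℝ) ^ ((m : ℝ) * (p - 1)) ≤ FpA A C' p ∧ FpA A C' p ≤ FpA A C p := by
  simpa only [projMoment_eq_FpA, Fintype.card_fin, Nat.cast_ofNat] using
    stmt_18_general A hp hsub hm
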